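/- Let (a_β)_{β∈ℕ^d} be a real sequence such that Σ_{β∈ℕ^d} (2|β|+d)^{2n} a_β² < ∞ for every n ∈ ℕ. Then there exists a function φ in the Schwartz space S(ℝ^d) such that ∫_{ℝ^d} φ(x) h_β(x) dx = a_β for every β ∈ ℕ^d. -/

import Mathlib

open MeasureTheory

noncomputable def hermitePoly (n : ℕ) (x : ℝ) : ℝ :=
  (-1 : ℝ) ^ n * Real.exp (x ^ 2 / 2) *
    iteratedDeriv n (fun y : ℝ => Real.exp (-(y ^ 2 / 2))) x

noncomputable def hermiteFun (n : ℕ) (x : ℝ) : ℝ :=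
  (Real.sqrt (Real.sqrt (2 * Real.pi) * n.factorial))⁻¹ *
    Real.exp (-(x ^ 2 / 4)) * hermitePoly n x

noncomputable def hermiteFunMulti (d : ℕ) (α : Fin d → ℕ) (x : EuclideanSpace ℝ (Fin d)) : ℝ :=
  ∏ i, hermiteFun (α i) (x i)

noncomputable def hermCoeff (d : ℕ) (f : EuclideanSpace ℝ (Fin d) → ℝ) (β : Fin d → ℕ) : ℝ :=
  ∫ x, f x * hermiteFunMulti d β x

open Polynomial in
theorem hermP_eq (n : ℕ) (x : ℝ) : hermitePoly n x = aeval x (hermite n) := by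
  rw [hermite_eq_deriv_gaussian', hermitePoly, iteratedDeriv_eq_iterate]; ring

open Polynomial in
theorem hermP_derivative (n : ℕ) : derivative (hermite (n+1)) = ((n+1 : ℕ) : ℤ[X]) * hermite n := by
  induction n with
  | zero => simp
  | succ n ih =>
    rw [hermite_succ (n+1), ih]
    simp only [derivative_sub, derivative_mul, derivative_X, derivative_natCast, ih]
    rw [hermite_succ n]; push_cast; ring

open Polynomial in
theorem hermP_hasDerivAt (n : ℕ) (x : ℝ) :
    HasDerivAt (hermitePoly n) (n * hermitePoly (n-1) x) x := by
  have h : hermitePoly n = fun x => aeval x (hermite n) := by ext x; exact hermP_eq n x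
  rw [h, hermP_eq]
  have := Polynomial.hasDerivAt_aeval (hermite n) x
  refine this.congr_deriv ?_
  cases n with
  | zero => simp
  | succ n => rw [hermP_derivative]; simp

open Polynomial in
theorem hermP_succ (n : ℕ) (x : ℝ) :
    hermitePoly (n+1) x = x * hermitePoly n x - n * hermitePoly (n-1) x := by
  rw [hermP_eq, hermP_eq, hermP_eq, hermite_succ]
  cases n with
  | zero => simp
  | succ n => rw [hermP_derivative]; simp

noncomputable def hermC (n : ℕ) : ℝ := (Real.sqrt (Real.sqrt (2 * Real.pi) * n.factorial))⁻¹

theorem hermC_succ (n : ℕ) : hermC n = √((n:ℝ)+1) * hermC (n+1) := by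
  unfold hermC
  rw [Nat.factorial_succ]; push_cast
  rw [show √(2 * Real.pi) * (((n:ℝ)+1) * n.factorial) = (n+1) * (√(2 * Real.pi) * n.factorial) by ring,
    Real.sqrt_mul (x := (n:ℝ)+1) (by positivity), mul_inv, ← mul_assoc, mul_inv_cancel₀ (by positivity), one_mul]

theorem hermF_eq (n : ℕ) (x : ℝ) :
    hermiteFun n x = hermC n * Real.exp (-(x^2/4)) * hermitePoly n x := rfl

theorem hermC_pred (n : ℕ) : (n:ℝ) * hermC n = √(n:ℝ) * hermC (n-1) := by
  cases n with
  | zero => simp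
  | succ n =>
    simp only [Nat.add_sub_cancel]
    rw [hermC_succ n, ← mul_assoc]; push_cast
    rw [Real.mul_self_sqrt (by positivity)]

theorem hermF_mul_x (n : ℕ) (x : ℝ) : x * hermiteFun n x =
    √((n:ℝ)+1) * hermiteFun (n+1) x + √(n:ℝ) * hermiteFun (n-1) x := by
  rw [hermF_eq, hermF_eq, hermF_eq, hermP_succ]
  have h1 := hermC_succ n
  have h2 := hermC_pred n
  set E := Real.exp (-(x^2/4))
  linear_combination (E * (x * hermitePoly n x - n * hermitePoly (n-1) x)) * h1 + E * hermitePoly (n-1) x * h2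

theorem hermF_hasDerivAt' (n : ℕ) (x : ℝ) : HasDerivAt (hermiteFun n)
    (√(n:ℝ) * hermiteFun (n-1) x - x / 2 * hermiteFun n x) x := by
  have h0 : HasDerivAt (fun x : ℝ => Real.exp (-(x^2/4))) (Real.exp (-(x^2/4)) * (-(x/2))) x := by
    have : HasDerivAt (fun x : ℝ => -(x^2/4)) (-(x/2)) x := by
      refine ((hasDerivAt_pow 2 x).div_const 4).neg.congr_deriv ?_
      simp; ring
    exact this.exp
  have h := (h0.const_mul (hermC n)).mul (hermP_hasDerivAt n x)
  refine HasDerivAt.congr_deriv (f := hermiteFun n) h ?_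
  rw [hermF_eq, hermF_eq]
  have h2 := hermC_pred n
  set E := Real.exp (-(x^2/4))
  linear_combination (E * hermitePoly (n-1) x) * h2

theorem hermF_hasDerivAt (n : ℕ) (x : ℝ) : HasDerivAt (hermiteFun n)
    ((√(n:ℝ) * hermiteFun (n-1) x - √((n:ℝ)+1) * hermiteFun (n+1) x)/2) x := by
  refine (hermF_hasDerivAt' n x).congr_deriv ?_
  have := hermF_mul_x n x
  linear_combination (-1/2) * this

open Polynomial in
theorem herm_poly_gauss_integrable (p : ℤ[X]) :
    Integrable (fun x : ℝ => aeval x p * Real.exp (-(x^2/2))) := by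
  induction p using Polynomial.induction_on' with
  | add p q hp hq =>
    refine (hp.add hq).congr (.of_forall fun x => ?_)
    simp [add_mul]
  | monomial n a =>
    have := (integrable_rpow_mul_exp_neg_mul_sq (b := 1/2) (by norm_num) (s := n)
      (by have : (0:ℝ) ≤ n := by positivity
          linarith)).const_mul (a:ℝ)
    refine this.congr (.of_forall fun x => ?_)
    simp [aeval_monomial]
    rw [mul_assoc]; congr 3; ring

theorem hermF_int (n m : ℕ) : Integrable (fun x => hermiteFun n x * hermiteFun m x) := by
  have := (herm_poly_gauss_integrable (Polynomial.hermite n * Polynomial.hermite m)).const_mul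
    (hermC n * hermC m)
  refine this.congr (.of_forall fun x => ?_)
  simp only [hermF_eq, hermP_eq, map_mul]
  have : Real.exp (-(x^2/2)) = Real.exp (-(x^2/4)) * Real.exp (-(x^2/4)) := by
    rw [← Real.exp_add]; ring_nf
  rw [this]; ring

theorem hermF_ladder (n m : ℕ) :
    √((n:ℝ)+1) * ∫ x, hermiteFun (n+1) x * hermiteFun m x =
    √(m:ℝ) * ∫ x, hermiteFun n x * hermiteFun (m-1) x := by
  have hd : ∀ x, HasDerivAt (fun x => hermiteFun n x * hermiteFun m x)
      (√(m:ℝ) * (hermiteFun n x * hermiteFun (m-1) x) -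
        √((n:ℝ)+1) * (hermiteFun (n+1) x * hermiteFun m x)) x := by
    intro x
    refine ((hermF_hasDerivAt n x).mul (hermF_hasDerivAt' m x)).congr_deriv ?_
    have := hermF_mul_x n x
    linear_combination (-1/2) * hermiteFun m x * this
  have h1 := (hermF_int n (m-1)).const_mul (√(m:ℝ))
  have h2 := (hermF_int (n+1) m).const_mul (√((n:ℝ)+1))
  have := integral_eq_zero_of_hasDerivAt_of_integrable hd (h1.sub h2) (hermF_int n m)
  rw [integral_sub h1 h2, integral_const_mul, integral_const_mul] at this
  linarith

theorem hermF_orth (n m : ℕ) : ∫ x, hermiteFun n x * hermiteFun m x = if n = m then 1 else 0 := by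
  induction n generalizing m with
  | zero =>
    cases m with
    | zero =>
      have : ∀ x, hermiteFun 0 x * hermiteFun 0 x = (√(2*Real.pi))⁻¹ * Real.exp (-(1/2) * x^2) := by
        intro x
        have h2 : Real.exp (-(1/2) * x^2) = Real.exp (-(x^2/4)) * Real.exp (-(x^2/4)) := by
          rw [← Real.exp_add]; ring_nf
        have h3 : hermC 0 * hermC 0 = (√(2*Real.pi))⁻¹ := by
          unfold hermC; simp only [Nat.factorial_zero, Nat.cast_one, mul_one]
          rw [← mul_inv, Real.mul_self_sqrt (by positivity)]
        simp only [hermF_eq, hermP_eq, h2, ← h3]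
        simp; ring
      simp only [this, integral_const_mul, integral_gaussian]
      rw [show Real.pi / (1/2) = 2 * Real.pi by ring, if_pos trivial]
      exact inv_mul_cancel₀ (by positivity)
    | succ m =>
      have := hermF_ladder m 0
      simp only [Nat.cast_zero, Real.sqrt_zero, zero_mul, mul_eq_zero] at this
      have h2 : √((m:ℝ)+1) ≠ 0 := by positivity
      rw [if_neg (by omega)]
      have := this.resolve_left h2
      rw [← this]; congr 1; ext x; ring
  | succ n ih =>
    have := hermF_ladder n m
    have h2 : √((n:ℝ)+1) ≠ 0 := by positivity
    cases m with
    | zero =>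
      simp only [Nat.cast_zero, Real.sqrt_zero, zero_mul, mul_eq_zero] at this
      rw [if_neg (by omega)]; exact this.resolve_left h2
    | succ m =>
      simp only [Nat.add_sub_cancel, ih] at this
      apply mul_left_cancel₀ h2
      rw [this]
      by_cases h : n = m
      · subst h; simp
      · simp [h]

theorem hermF_bound (n : ℕ) (x : ℝ) : |hermiteFun n x| ≤ 2 * ((n:ℝ)+1) := by
  have hd : ∀ x, HasDerivAt (fun x => hermiteFun n x * hermiteFun n x)
      (√(n:ℝ) * (hermiteFun n x * hermiteFun (n-1) x) -
        √((n:ℝ)+1) * (hermiteFun n x * hermiteFun (n+1) x)) x := by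
    intro x
    refine ((hermF_hasDerivAt n x).mul (hermF_hasDerivAt n x)).congr_deriv ?_
    ring
  have h1 := (hermF_int n (n-1)).const_mul (√(n:ℝ))
  have h2 := (hermF_int n (n+1)).const_mul (√((n:ℝ)+1))
  have h12 := h1.sub h2
  have ht := tendsto_zero_of_hasDerivAt_of_integrableOn_Iic (a := x) (fun x _ => hd x)
    h12.integrableOn (hermF_int n n).integrableOn
  have he := integral_Iic_of_hasDerivAt_of_tendsto' (a := x) (fun x _ => hd x) h12.integrableOn ht
  simp only [sub_zero] at he
  set G : ℝ → ℝ := fun y => √((n:ℝ)+1) * ((hermiteFun n y * hermiteFun n y)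
      + (1/2) * (hermiteFun (n-1) y * hermiteFun (n-1) y)
      + (1/2) * (hermiteFun (n+1) y * hermiteFun (n+1) y)) with hG
  have hGi : Integrable G :=
    (((hermF_int n n).add ((hermF_int (n-1) (n-1)).const_mul (1/2))).add
      ((hermF_int (n+1) (n+1)).const_mul (1/2))).const_mul _
  have hGv : ∫ y, G y = 2 * √((n:ℝ)+1) := by
    rw [hG, integral_const_mul, integral_add, integral_add, integral_const_mul, integral_const_mul,
      hermF_orth, hermF_orth, hermF_orth]
    · simp; ring
    · exact hermF_int n n
    · exact (hermF_int (n-1) (n-1)).const_mul (1/2)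
    · exact (hermF_int n n).add ((hermF_int (n-1) (n-1)).const_mul (1/2))
    · exact ((hermF_int (n+1) (n+1)).const_mul (1/2))
  have hG0 : ∀ y, 0 ≤ G y := fun y => by
    have h1 := mul_self_nonneg (hermiteFun n y)
    have h2 := mul_self_nonneg (hermiteFun (n-1) y)
    have h3 := mul_self_nonneg (hermiteFun (n+1) y)
    simp only [hG]; positivity
  have hle : hermiteFun n x * hermiteFun n x ≤ 2 * √((n:ℝ)+1) := by
    rw [← he, ← hGv]
    refine (integral_mono h12.integrableOn hGi.integrableOn ?_).trans
      (setIntegral_le_integral hGi (.of_forall hG0))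
    intro y
    have hs : √(n:ℝ) ≤ √((n:ℝ)+1) := Real.sqrt_le_sqrt (by linarith)
    have hs0 := Real.sqrt_nonneg (n:ℝ)
    simp only [hG, Pi.sub_apply]
    have a1 : hermiteFun n y * hermiteFun (n-1) y ≤
      (1/2) * (hermiteFun n y * hermiteFun n y) + (1/2) * (hermiteFun (n-1) y * hermiteFun (n-1) y) := by
      nlinarith [sq_nonneg (hermiteFun n y - hermiteFun (n-1) y)]
    have a2 : -(hermiteFun n y * hermiteFun (n+1) y) ≤
      (1/2) * (hermiteFun n y * hermiteFun n y) + (1/2) * (hermiteFun (n+1) y * hermiteFun (n+1) y) := by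
      nlinarith [sq_nonneg (hermiteFun n y + hermiteFun (n+1) y)]
    have a3 : 0 ≤ (1/2) * (hermiteFun n y * hermiteFun n y)
        + (1/2) * (hermiteFun (n-1) y * hermiteFun (n-1) y) := by
      nlinarith [sq_nonneg (hermiteFun n y), sq_nonneg (hermiteFun (n-1) y)]
    have b1 := mul_le_mul_of_nonneg_left a1 hs0
    have b2 := mul_le_mul_of_nonneg_left a2 (hs0.trans hs)
    have b3 := mul_le_mul_of_nonneg_right hs a3
    linarith
  have hs : √((n:ℝ)+1) ≤ (n:ℝ)+1 := by
    rw [Real.sqrt_le_left (by positivity)]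
    nlinarith [(Nat.cast_nonneg n : (0:ℝ) ≤ n)]
  apply abs_le_of_sq_le_sq _ (by positivity)
  nlinarith [(Nat.cast_nonneg n : (0:ℝ) ≤ n)]

theorem hermF_contDiff (n : ℕ) : ContDiff ℝ (⊤ : ℕ∞) (hermiteFun n) := by
  have h : hermiteFun n = fun x => hermC n * Real.exp (-(x^2/4)) * Polynomial.aeval x (Polynomial.hermite n) := by
    ext x; rw [hermF_eq, hermP_eq]
  rw [h]
  have := Polynomial.contDiff_aeval (𝕜 := ℝ) (Polynomial.hermite n) (⊤ : ℕ∞)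
  fun_prop

noncomputable def hermW {d : ℕ} (β : Fin d → ℕ) : ℝ := (∑ i, (β i : ℝ)) + 1

def hermUp {d : ℕ} (β : Fin d → ℕ) (i : Fin d) : Fin d → ℕ := Function.update β i (β i + 1)

def hermDn {d : ℕ} (β : Fin d → ℕ) (i : Fin d) : Fin d → ℕ := Function.update β i (β i - 1)

theorem hermW_coord {d : ℕ} (β : Fin d → ℕ) (i : Fin d) : (β i : ℝ) + 1 ≤ hermW β := by
  unfold hermW
  have := Finset.single_le_sum (f := fun i => (β i : ℝ)) (fun i _ => by positivity) (Finset.mem_univ i)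
  simpa using this

theorem hermW_one {d : ℕ} (β : Fin d → ℕ) : 1 ≤ hermW β := by
  unfold hermW
  have : 0 ≤ ∑ i, (β i : ℝ) := by positivity
  linarith

theorem hermW_update {d : ℕ} (β : Fin d → ℕ) (i : Fin d) (m : ℕ) (hm : m ≤ β i + 1) :
    hermW (Function.update β i m) ≤ 2 * hermW β := by
  have h1 := hermW_one β
  have h2 : hermW (Function.update β i m) ≤ hermW β + 1 := by
    unfold hermW
    rw [← Finset.add_sum_erase _ _ (Finset.mem_univ i), ← Finset.add_sum_erase (a := i) (s := Finset.univ) (fun i => (β i : ℝ)) (Finset.mem_univ i)]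
    have : ∑ x ∈ Finset.univ.erase i, ((Function.update β i m x : ℕ) : ℝ) = ∑ x ∈ Finset.univ.erase i, (β x : ℝ) :=
      Finset.sum_congr rfl fun j hj => by rw [Function.update_of_ne (Finset.ne_of_mem_erase hj)]
    rw [this, Function.update_self]
    have : (m : ℝ) ≤ β i + 1 := by exact_mod_cast hm
    linarith
  linarith

theorem herm_sqrt_le {y w : ℝ} (hw : 1 ≤ w) (h : y ≤ w) : √y ≤ w := by
  rw [Real.sqrt_le_left (by linarith)]
  nlinarith

theorem hermW_sqrt1 {d : ℕ} (β : Fin d → ℕ) (i : Fin d) : √((β i : ℝ) + 1) ≤ hermW β :=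
  herm_sqrt_le (hermW_one β) (hermW_coord β i)

theorem hermW_sqrt0 {d : ℕ} (β : Fin d → ℕ) (i : Fin d) : √(β i : ℝ) ≤ hermW β :=
  herm_sqrt_le (hermW_one β) (by linarith [hermW_coord β i])

theorem herm_step {d : ℕ} (A : (Fin d → ℕ) → ℝ) (C : ℝ) (M : ℕ) (hC : 0 ≤ C)
    (hA0 : ∀ β, 0 ≤ A β) (hA : ∀ β, A β ≤ C * hermW β ^ M) (β : Fin d → ℕ) (i : Fin d) :
    √((β i : ℝ) + 1) * A (hermUp β i) + √(β i : ℝ) * A (hermDn β i) ≤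
      (2 * C * 2 ^ M) * hermW β ^ (M+1) := by
  have hw := hermW_one β
  have key : ∀ γ : Fin d → ℕ, hermW γ ≤ 2 * hermW β → A γ ≤ C * 2 ^ M * hermW β ^ M := by
    intro γ hγ
    refine (hA γ).trans ?_
    rw [mul_assoc, ← mul_pow]
    have := hermW_one γ
    gcongr
  have h1 := key _ (hermW_update β i (β i + 1) le_rfl)
  have h2 := key _ (hermW_update β i (β i - 1) (by omega))
  have h3 := mul_le_mul (hermW_sqrt1 β i) h1 (hA0 _) (by linarith)
  have h4 := mul_le_mul (hermW_sqrt0 β i) h2 (hA0 _) (by linarith)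
  refine (add_le_add h3 h4).trans (le_of_eq ?_)
  ring

theorem hermM_update {d : ℕ} (β : Fin d → ℕ) (i : Fin d) (m : ℕ) (x : EuclideanSpace ℝ (Fin d)) :
    hermiteFunMulti d (Function.update β i m) x =
      hermiteFun m (x i) * ∏ j ∈ Finset.univ.erase i, hermiteFun (β j) (x j) := by
  unfold hermiteFunMulti
  rw [← Finset.mul_prod_erase _ _ (Finset.mem_univ i), Function.update_self]
  congr 1
  exact Finset.prod_congr rfl fun j hj => by rw [Function.update_of_ne (Finset.ne_of_mem_erase hj)]

theorem hermM_self {d : ℕ} (β : Fin d → ℕ) (i : Fin d) (x : EuclideanSpace ℝ (Fin d)) :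
    hermiteFunMulti d β x =
      hermiteFun (β i) (x i) * ∏ j ∈ Finset.univ.erase i, hermiteFun (β j) (x j) := by
  rw [← hermM_update, Function.update_eq_self]

theorem hermM_mul_x {d : ℕ} (β : Fin d → ℕ) (i : Fin d) (x : EuclideanSpace ℝ (Fin d)) :
    x i * hermiteFunMulti d β x = √((β i : ℝ) + 1) * hermiteFunMulti d (hermUp β i) x
      + √(β i : ℝ) * hermiteFunMulti d (hermDn β i) x := by
  rw [hermUp, hermDn, hermM_update, hermM_update, hermM_self β i]
  linear_combination (∏ j ∈ Finset.univ.erase i, hermiteFun (β j) (x j)) * hermF_mul_x (β i) (x i)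

theorem hermM_contDiff {d : ℕ} (β : Fin d → ℕ) : ContDiff ℝ (⊤ : ℕ∞) (hermiteFunMulti d β) := by
  unfold hermiteFunMulti
  refine contDiff_prod fun i _ => ?_
  exact (hermF_contDiff (β i)).comp (EuclideanSpace.proj (𝕜 := ℝ) i).contDiff

theorem hermM_hasFDerivAt {d : ℕ} (β : Fin d → ℕ) (x : EuclideanSpace ℝ (Fin d)) :
    HasFDerivAt (hermiteFunMulti d β)
      (∑ i, ((√(β i : ℝ)/2) * hermiteFunMulti d (hermDn β i) x
        + (-(√((β i : ℝ) + 1)/2)) * hermiteFunMulti d (hermUp β i) x) •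
          (EuclideanSpace.proj (𝕜 := ℝ) i : EuclideanSpace ℝ (Fin d) →L[ℝ] ℝ)) x := by
  have h := HasFDerivAt.finsetProd (u := Finset.univ)
    (g := fun (i : Fin d) (x : EuclideanSpace ℝ (Fin d)) => hermiteFun (β i) (x i)) (x := x)
    (g' := fun i => ((√(β i : ℝ) * hermiteFun (β i - 1) (x i)
      - √((β i : ℝ)+1) * hermiteFun (β i + 1) (x i))/2) •
        (EuclideanSpace.proj (𝕜 := ℝ) i : EuclideanSpace ℝ (Fin d) →L[ℝ] ℝ))
    (fun i _ => HasDerivAt.comp_hasFDerivAt (h₂ := hermiteFun (β i))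
      (f := (EuclideanSpace.proj (𝕜 := ℝ) i : EuclideanSpace ℝ (Fin d) →L[ℝ] ℝ))
      x (hermF_hasDerivAt (β i) (x i))
      (EuclideanSpace.proj (𝕜 := ℝ) i : EuclideanSpace ℝ (Fin d) →L[ℝ] ℝ).hasFDerivAt)
  refine h.congr_fderiv ?_
  refine Finset.sum_congr rfl fun i _ => ?_
  rw [hermUp, hermDn, hermM_update, hermM_update, smul_smul]
  congr 1
  ring

theorem hermE_norm_le {d : ℕ} (x : EuclideanSpace ℝ (Fin d)) : ‖x‖ ≤ ∑ i, |x i| := by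
  apply le_of_sq_le_sq _ (by positivity)
  rw [EuclideanSpace.norm_sq_eq]
  exact Finset.sum_sq_le_sq_sum_of_nonneg fun i _ => abs_nonneg _

theorem hermM_bound0 {d : ℕ} (β : Fin d → ℕ) (x : EuclideanSpace ℝ (Fin d)) :
    |hermiteFunMulti d β x| ≤ 2 ^ d * hermW β ^ d := by
  unfold hermiteFunMulti
  rw [Finset.abs_prod, ← mul_pow]
  refine (Finset.prod_le_prod (fun i _ => abs_nonneg _)
    (fun i _ => (hermF_bound (β i) (x i)).trans
      (mul_le_mul_of_nonneg_left (hermW_coord β i) (by norm_num)))).trans (le_of_eq ?_)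
  simp

theorem hermM_boundA (d k : ℕ) : ∃ (C : ℝ) (M : ℕ), 0 ≤ C ∧ ∀ (β : Fin d → ℕ)
    (x : EuclideanSpace ℝ (Fin d)), ‖x‖ ^ k * |hermiteFunMulti d β x| ≤ C * hermW β ^ M := by
  induction k with
  | zero => exact ⟨2 ^ d, d, by positivity, fun β x => by simpa using hermM_bound0 β x⟩
  | succ k ih =>
    obtain ⟨C, M, hC, h⟩ := ih
    refine ⟨d * (2 * C * 2 ^ M), M + 1, by positivity, fun β x => ?_⟩
    have hx : ‖x‖ ^ (k+1) * |hermiteFunMulti d β x| ≤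
        ∑ i, ‖x‖ ^ k * |x i * hermiteFunMulti d β x| := by
      simp only [abs_mul]
      rw [← Finset.mul_sum, ← Finset.sum_mul, pow_succ, mul_assoc]
      have := hermE_norm_le x
      gcongr
    refine hx.trans ?_
    have : ∀ i ∈ Finset.univ, ‖x‖ ^ k * |x i * hermiteFunMulti d β x| ≤
        (2 * C * 2 ^ M) * hermW β ^ (M+1) := by
      intro i _
      have hs := herm_step (fun β => ‖x‖ ^ k * |hermiteFunMulti d β x|) C M hC
        (fun β => by positivity) (fun β => h β x) β i
      refine le_trans ?_ hs
      rw [hermM_mul_x]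
      refine (mul_le_mul_of_nonneg_left (abs_add_le _ _) (by positivity)).trans (le_of_eq ?_)
      rw [abs_mul, abs_mul, abs_of_nonneg (Real.sqrt_nonneg _), abs_of_nonneg (Real.sqrt_nonneg _)]
      ring
    refine (Finset.sum_le_sum this).trans (le_of_eq ?_)
    simp; ring

theorem herm_iter_lin {E : Type*} [NormedAddCommGroup E] [NormedSpace ℝ E] (n : ℕ) (f g : E → ℝ)
    (hf : ContDiff ℝ (⊤ : ℕ∞) f) (hg : ContDiff ℝ (⊤ : ℕ∞) g) (a b : ℝ) (x : E) :
    ‖iteratedFDeriv ℝ n (fun x => a * f x + b * g x) x‖ ≤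
      |a| * ‖iteratedFDeriv ℝ n f x‖ + |b| * ‖iteratedFDeriv ℝ n g x‖ := by
  have hn : (n : WithTop ℕ∞) ≤ ((⊤ : ℕ∞) : WithTop ℕ∞) := by exact_mod_cast le_top
  have hf' : ContDiffAt ℝ n f x := (hf.of_le hn).contDiffAt
  have hg' : ContDiffAt ℝ n g x := (hg.of_le hn).contDiffAt
  have : (fun x => a * f x + b * g x) = a • f + b • g := by ext; simp
  have h1 : ContDiffAt ℝ n (a • f) x := hf'.const_smul a
  have h2 : ContDiffAt ℝ n (b • g) x := hg'.const_smul b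
  rw [this, iteratedFDeriv_add_apply h1 h2,
    iteratedFDeriv_const_smul_apply hf', iteratedFDeriv_const_smul_apply hg']
  refine (norm_add_le _ _).trans (le_of_eq ?_)
  rw [norm_smul, norm_smul, Real.norm_eq_abs, Real.norm_eq_abs]

theorem hermM_boundB (d n : ℕ) : ∀ k : ℕ, ∃ (C : ℝ) (M : ℕ), 0 ≤ C ∧ ∀ (β : Fin d → ℕ)
    (x : EuclideanSpace ℝ (Fin d)),
    ‖x‖ ^ k * ‖iteratedFDeriv ℝ n (hermiteFunMulti d β) x‖ ≤ C * hermW β ^ M := by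
  induction n with
  | zero =>
    intro k
    obtain ⟨C, M, hC, h⟩ := hermM_boundA d k
    exact ⟨C, M, hC, fun β x => by simpa using h β x⟩
  | succ n ih =>
    intro k
    obtain ⟨C, M, hC, h⟩ := ih k
    set L : Fin d → ℝ →L[ℝ] (EuclideanSpace ℝ (Fin d) →L[ℝ] ℝ) := fun i =>
      ContinuousLinearMap.toSpanSingleton ℝ
        (EuclideanSpace.proj (𝕜 := ℝ) i : EuclideanSpace ℝ (Fin d) →L[ℝ] ℝ) with hL
    refine ⟨(∑ i, ‖L i‖) * (2 * C * 2 ^ M), M + 1, by positivity, fun β x => ?_⟩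
    set F : Fin d → EuclideanSpace ℝ (Fin d) → ℝ := fun i x =>
      (√(β i : ℝ)/2) * hermiteFunMulti d (hermDn β i) x
        + (-(√((β i : ℝ) + 1)/2)) * hermiteFunMulti d (hermUp β i) x with hF
    have hFc : ∀ i, ContDiff ℝ (⊤ : ℕ∞) (F i) := fun i =>
      (contDiff_const.mul (hermM_contDiff _)).add (contDiff_const.mul (hermM_contDiff _))
    have hn : (n : WithTop ℕ∞) ≤ ((⊤ : ℕ∞) : WithTop ℕ∞) := by exact_mod_cast le_top
    have hfd : fderiv ℝ (hermiteFunMulti d β) = fun x => ∑ i, (L i ∘ F i) x := by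
      ext1 x
      rw [(hermM_hasFDerivAt β x).fderiv]
      rfl
    rw [← norm_iteratedFDeriv_fderiv, hfd, iteratedFDeriv_sum
      (fun i _ => ((L i).contDiff.comp (hFc i)).of_le hn), Finset.sum_apply]
    have hi : ∀ i ∈ Finset.univ, ‖iteratedFDeriv ℝ n (L i ∘ F i) x‖ ≤ ‖L i‖ *
        (√((β i : ℝ) + 1) * ‖iteratedFDeriv ℝ n (hermiteFunMulti d (hermUp β i)) x‖
          + √(β i : ℝ) * ‖iteratedFDeriv ℝ n (hermiteFunMulti d (hermDn β i)) x‖) := by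
      intro i _
      refine ((L i).norm_iteratedFDeriv_comp_left (hFc i).contDiffAt hn).trans ?_
      refine mul_le_mul_of_nonneg_left ?_ (norm_nonneg _)
      refine (herm_iter_lin n _ _ (hermM_contDiff _) (hermM_contDiff _) _ _ x).trans ?_
      rw [abs_neg, abs_of_nonneg (by positivity), abs_of_nonneg (by positivity)]
      have h1 : 0 ≤ √((β i : ℝ) + 1) * ‖iteratedFDeriv ℝ n (hermiteFunMulti d (hermUp β i)) x‖ := by
        positivity
      have h2 : 0 ≤ √(β i : ℝ) * ‖iteratedFDeriv ℝ n (hermiteFunMulti d (hermDn β i)) x‖ := by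
        positivity
      linarith
    refine (mul_le_mul_of_nonneg_left ((norm_sum_le _ _).trans (Finset.sum_le_sum hi))
      (by positivity)).trans ?_
    rw [Finset.mul_sum, Finset.sum_mul, Finset.sum_mul]
    refine Finset.sum_le_sum fun i _ => ?_
    have hs := herm_step (fun β => ‖x‖ ^ k * ‖iteratedFDeriv ℝ n (hermiteFunMulti d β) x‖) C M hC
        (fun β => by positivity) (fun β => h β x) β i
    rw [mul_assoc ‖L i‖]
    refine le_trans (le_of_eq ?_) (mul_le_mul_of_nonneg_left hs (norm_nonneg (L i)))
    ring

theorem herm_summable_prod (d : ℕ) :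
    Summable (fun β : Fin d → ℕ => ∏ i, (1 / ((β i : ℝ) + 1) ^ 2)) := by
  induction d with
  | zero => exact Summable.of_finite
  | succ d ih =>
    have h1 : Summable (fun n : ℕ => 1 / ((n : ℝ) + 1) ^ 2) := by
      have := (summable_nat_add_iff 1).2 (Real.summable_one_div_nat_pow (p := 2).2 (by norm_num))
      simpa using this
    have h2 := h1.mul_of_nonneg ih (fun n => by positivity) (fun β => by positivity)
    rw [← (Fin.consEquiv (fun _ => ℕ)).summable_iff]
    refine h2.congr fun p => ?_
    simp [Fin.prod_univ_succ, Fin.consEquiv, mul_comm]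

theorem herm_summable (d : ℕ) (a : (Fin d → ℕ) → ℝ)
    (ha : ∀ n : ℕ, Summable (fun β : Fin d → ℕ =>
      (((2 * ∑ i, β i) + d : ℕ) : ℝ) ^ (2 * n) * a β ^ 2)) (M : ℕ) :
    Summable (fun β => |a β| * hermW β ^ M) := by
  rcases Nat.eq_zero_or_pos d with rfl | hd
  · exact Summable.of_finite
  refine Summable.of_nonneg_of_le (fun β => ?_) (fun β => ?_) ((ha (M+d)).add (herm_summable_prod d))
  · have := hermW_one β; positivity
  have hw := hermW_one β
  have hw0 : 0 < hermW β := by linarith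
  have hN : hermW β ≤ (((2 * ∑ i, β i) + d : ℕ) : ℝ) := by
    unfold hermW; push_cast
    have : (1:ℝ) ≤ d := by exact_mod_cast hd
    have : 0 ≤ ∑ i, (β i : ℝ) := by positivity
    linarith
  have h1 : hermW β ^ (2 * (M+d)) * a β ^ 2 ≤ (((2 * ∑ i, β i) + d : ℕ) : ℝ) ^ (2 * (M+d)) * a β ^ 2 := by
    gcongr
  have h2 : (1 / hermW β ^ d) ^ 2 ≤ ∏ i, (1 / ((β i : ℝ) + 1) ^ 2) := by
    have : (1 / hermW β ^ d) ^ 2 = ∏ i : Fin d, (1 / hermW β ^ 2) := by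
      simp [← pow_mul, mul_comm]
    rw [this]
    refine Finset.prod_le_prod (fun i _ => by positivity) fun i _ => ?_
    have := hermW_coord β i
    gcongr
  have h3 : |a β| * hermW β ^ M = (|a β| * hermW β ^ (M+d)) * (1 / hermW β ^ d) := by
    rw [pow_add]; field_simp
  have h4 : (|a β| * hermW β ^ (M+d)) ^ 2 = hermW β ^ (2 * (M+d)) * a β ^ 2 := by
    rw [mul_pow, sq_abs, ← pow_mul, mul_comm (M+d) 2, mul_comm]
  have h5 := two_mul_le_add_sq (|a β| * hermW β ^ (M+d)) (1 / hermW β ^ d)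
  have h6 : 0 ≤ |a β| * hermW β ^ M := by positivity
  rw [h4] at h5
  linarith

theorem hermM_int {d : ℕ} (β γ : Fin d → ℕ) :
    Integrable (fun x => hermiteFunMulti d β x * hermiteFunMulti d γ x) := by
  have h : Integrable (fun x : Fin d → ℝ => ∏ i, (hermiteFun (β i) (x i) * hermiteFun (γ i) (x i))) :=
    Integrable.fintype_prod (f := fun i y => hermiteFun (β i) y * hermiteFun (γ i) y)
      fun i => hermF_int (β i) (γ i)
  have := (EuclideanSpace.volume_preserving_symm_measurableEquiv_toLp (Fin d)).integrable_comp_of_integrable h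
  refine this.congr (.of_forall fun x => ?_)
  simp [hermiteFunMulti, Finset.prod_mul_distrib]

theorem hermM_orth {d : ℕ} (β γ : Fin d → ℕ) :
    ∫ x, hermiteFunMulti d β x * hermiteFunMulti d γ x = if β = γ then 1 else 0 := by
  have h := (EuclideanSpace.volume_preserving_symm_measurableEquiv_toLp (Fin d)).integral_comp'
    (fun x : Fin d → ℝ => ∏ i, (hermiteFun (β i) (x i) * hermiteFun (γ i) (x i)))
  have h2 := integral_fintype_prod_volume_eq_prod
    (fun (i : Fin d) y => hermiteFun (β i) y * hermiteFun (γ i) y)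
  rw [h2] at h
  simp only [hermF_orth] at h
  have e : (∏ i, if β i = γ i then (1:ℝ) else 0) = if β = γ then 1 else 0 := by
    rw [Finset.prod_ite_zero]; simp [funext_iff]
  rw [e] at h
  rw [← h]
  congr 1; ext x
  simp [hermiteFunMulti, Finset.prod_mul_distrib]

theorem herm_iter_smul {E : Type*} [NormedAddCommGroup E] [NormedSpace ℝ E] (n : ℕ) (f : E → ℝ)
    (hf : ContDiff ℝ (⊤ : ℕ∞) f) (a : ℝ) (x : E) :
    ‖iteratedFDeriv ℝ n (fun x => a * f x) x‖ ≤ |a| * ‖iteratedFDeriv ℝ n f x‖ := by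
  simpa using herm_iter_lin n f f hf hf a 0 x

/-- Every rapidly decreasing sequence indexed by multi-indices is the sequence of
Hermite coefficients of some Schwartz function. -/
theorem rapidly_decreasing_seq_is_hermite_coeffs (d : ℕ) (a : (Fin d → ℕ) → ℝ)
    (ha : ∀ n : ℕ, Summable (fun β : Fin d → ℕ =>
      (((2 * ∑ i, β i) + d : ℕ) : ℝ) ^ (2 * n) * a β ^ 2)) :
    ∃ φ : SchwartzMap (EuclideanSpace ℝ (Fin d)) ℝ,
      ∀ β, hermCoeff d (fun z => φ z) β = a β := by

  have hsum := herm_summable d a ha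
  choose C M hC hCM using fun n k => hermM_boundB d n k
  set f : (Fin d → ℕ) → EuclideanSpace ℝ (Fin d) → ℝ := fun β x => a β * hermiteFunMulti d β x with hf
  have hfc : ∀ β, ContDiff ℝ ((⊤ : ℕ∞) : WithTop ℕ∞) (f β) := fun β =>
    contDiff_const.mul (hermM_contDiff β)
  have hb : ∀ n k β x, ‖x‖ ^ k * ‖iteratedFDeriv ℝ n (f β) x‖ ≤
      C n k * (|a β| * hermW β ^ M n k) := by
    intro n k β x
    have h1 := herm_iter_smul n _ (hermM_contDiff β) (a β) x
    have h2 := hCM n k β x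
    calc ‖x‖ ^ k * ‖iteratedFDeriv ℝ n (f β) x‖
        ≤ ‖x‖ ^ k * (|a β| * ‖iteratedFDeriv ℝ n (hermiteFunMulti d β) x‖) := by gcongr
      _ = |a β| * (‖x‖ ^ k * ‖iteratedFDeriv ℝ n (hermiteFunMulti d β) x‖) := by ring
      _ ≤ |a β| * (C n k * hermW β ^ M n k) := by gcongr
      _ = _ := by ring
  have hv : ∀ n k, Summable fun β => C n k * (|a β| * hermW β ^ M n k) := fun n k =>
    (hsum (M n k)).mul_left _
  have hb0 : ∀ (n : ℕ) β x, (n : ℕ∞) ≤ ⊤ → ‖iteratedFDeriv ℝ n (f β) x‖ ≤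
      C n 0 * (|a β| * hermW β ^ M n 0) := fun n β x _ => by simpa using hb n 0 β x
  refine ⟨⟨fun x => ∑' β, f β x, contDiff_tsum hfc (fun n _ => hv n 0) hb0, ?_⟩, ?_⟩
  · intro k n
    refine ⟨∑' β, C n k * (|a β| * hermW β ^ M n k), fun x => ?_⟩
    rw [iteratedFDeriv_tsum hfc (fun n _ => hv n 0) hb0 (k := n) le_top]
    have hs : Summable fun β => ‖iteratedFDeriv ℝ n (f β) x‖ :=
      Summable.of_nonneg_of_le (fun _ => norm_nonneg _) (fun β => hb0 n β x le_top) (hv n 0)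
    calc ‖x‖ ^ k * ‖∑' β, iteratedFDeriv ℝ n (f β) x‖
        ≤ ‖x‖ ^ k * ∑' β, ‖iteratedFDeriv ℝ n (f β) x‖ := by
          gcongr; exact norm_tsum_le_tsum_norm hs
      _ = ∑' β, ‖x‖ ^ k * ‖iteratedFDeriv ℝ n (f β) x‖ := by rw [tsum_mul_left]
      _ ≤ _ := (hs.mul_left _).tsum_le_tsum (fun β => hb n k β x) (hv n k)
  · intro γ
    change ∫ x, (∑' β, f β x) * hermiteFunMulti d γ x = a γ
    simp only [← tsum_mul_right]
    have hfe : ∀ β x, f β x * hermiteFunMulti d γ x =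
        a β * (hermiteFunMulti d β x * hermiteFunMulti d γ x) := fun β x => by simp only [hf]; ring
    have hint : ∀ β, Integrable fun x => f β x * hermiteFunMulti d γ x := fun β => by
      simp only [hfe]; exact (hermM_int β γ).const_mul _
    have hle : ∀ β, ∫ x, ‖f β x * hermiteFunMulti d γ x‖ ≤ |a β| * hermW β ^ 0 := by
      intro β
      simp only [hfe, norm_mul (a β), integral_const_mul, Real.norm_eq_abs (a β), pow_zero]
      refine mul_le_mul_of_nonneg_left ?_ (abs_nonneg _)
      have hi := (hermM_int β β).const_mul (1/2)
      have hj := (hermM_int γ γ).const_mul (1/2)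
      have hv : ∫ x, ((1/2) * (hermiteFunMulti d β x * hermiteFunMulti d β x) +
          (1/2) * (hermiteFunMulti d γ x * hermiteFunMulti d γ x)) = 1 := by
        rw [integral_add hi hj, integral_const_mul, integral_const_mul, hermM_orth, hermM_orth]
        norm_num
      rw [← hv]
      refine integral_mono (hermM_int β γ).norm (hi.add hj) fun x => ?_
      simp only [Real.norm_eq_abs, Pi.add_apply]
      rw [abs_le]
      constructor <;>
      nlinarith [sq_nonneg (hermiteFunMulti d β x - hermiteFunMulti d γ x),
        sq_nonneg (hermiteFunMulti d β x + hermiteFunMulti d γ x)]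
    have hS := hasSum_integral_of_summable_integral_norm hint
      (Summable.of_nonneg_of_le (fun β => integral_nonneg fun x => norm_nonneg _) hle (hsum 0))
    rw [← hS.tsum_eq]
    simp only [hfe, integral_const_mul, hermM_orth]
    rw [tsum_eq_single γ]
    · simp
    · intro β hβ; simp [hβ]
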